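/- arXiv:2505.14322 — 2 statements merged into one kernel-verified Lean document; each statement's English description precedes it below -/
import Mathlib

section
/- Let F be a flag of type {t₁, t₂, …, t_f} with t₁ < t₂ < ⋯ < t_f in the symplectic polar space of rank n. Then the number of chambers C with C_{t_i} = F_{t_i} for all i = 1, …, f equals ( ∏_{j=1}^{n−t_f} (q^j + 1) ) · z_{t₁} · z_{n−t_f} · ∏_{i=2}^{f} z_{t_i − t_{i−1}}, where z_k = ∏_{i=1}^{k} (q^i − 1)/(q − 1). -/
open scoped Classical

open Module

section Defs

variable {F V : Type} [Field F] [AddCommGroup V] [Module F V]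

/-- The orthogonal complement of a subspace with respect to a bilinear form. -/
def bperp (B : V →ₗ[F] V →ₗ[F] F) (W : Submodule F V) : Submodule F V :=
  ⨅ w ∈ W, LinearMap.ker (B w)

/-- A subspace is totally isotropic for `B`. -/
def IsTotIso (B : V →ₗ[F] V →ₗ[F] F) (W : Submodule F V) : Prop :=
  ∀ u ∈ W, ∀ w ∈ W, B u w = 0

/-- `B` is an alternating form. -/
def IsAltForm (B : V →ₗ[F] V →ₗ[F] F) : Prop := ∀ v, B v v = 0

/-- `B` is nondegenerate. -/
def NondegForm (B : V →ₗ[F] V →ₗ[F] F) : Prop := ∀ v, (∀ w, B v w = 0) → v = 0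

/-- A flag of type `J` of totally isotropic subspaces: entries outside `J` are `⊥`. -/
structure SFlag (B : V →ₗ[F] V →ₗ[F] F) (J : Finset ℕ) where
  space : ℕ → Submodule F V
  isotropic : ∀ i ∈ J, IsTotIso B (space i)
  finrank_eq : ∀ i ∈ J, Module.finrank F (space i) = i
  mono : ∀ i ∈ J, ∀ j ∈ J, i ≤ j → space i ≤ space j
  eq_bot : ∀ i, i ∉ J → space i = ⊥

/-- Two flags of type `J` are opposite. -/
def FlagOpp {B : V →ₗ[F] V →ₗ[F] F} {J : Finset ℕ} (C C' : SFlag B J) : Prop :=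
  ∀ i ∈ J, bperp B (C.space i) ⊓ C'.space i = ⊥

/-- An EKR-set of flags of type `J`: no two members are opposite. -/
def IsEKRFlags {B : V →ₗ[F] V →ₗ[F] F} {J : Finset ℕ} (𝓕 : Set (SFlag B J)) : Prop :=
  ∀ C ∈ 𝓕, ∀ C' ∈ 𝓕, ¬ FlagOpp C C'

/-- Two subspaces are opposite. -/
def SpaceOpp (B : V →ₗ[F] V →ₗ[F] F) (S T : Submodule F V) : Prop :=
  bperp B S ⊓ T = ⊥

/-- An EKR-set of totally isotropic `s`-spaces: no two members are opposite. -/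
def IsEKRSpaces (B : V →ₗ[F] V →ₗ[F] F) (s : ℕ) (𝓕 : Set (Submodule F V)) : Prop :=
  (∀ S ∈ 𝓕, IsTotIso B S ∧ Module.finrank F S = s) ∧
    ∀ S ∈ 𝓕, ∀ T ∈ 𝓕, ¬ SpaceOpp B S T

/-- An `s`-space `S` is heavy with respect to a set `𝓕` of flags: every flag whose
`s`-th entry equals `S` belongs to `𝓕`. -/
def Heavy {B : V →ₗ[F] V →ₗ[F] F} {J : Finset ℕ} (𝓕 : Set (SFlag B J)) (s : ℕ)
    (S : Submodule F V) : Prop :=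
  ∀ C : SFlag B J, C.space s = S → C ∈ 𝓕

end Defs

/-- `z_k = ∏_{i=1}^k (q^i-1)/(q-1)`. -/
noncomputable def zpol (q k : ℕ) : ℝ :=
  ∏ i ∈ Finset.Icc 1 k, ((q : ℝ) ^ i - 1) / ((q : ℝ) - 1)

/-- The Gaussian binomial coefficient `[m choose k]_q` as a real number. -/
noncomputable def gaussq (q m k : ℕ) : ℝ :=
  ∏ i ∈ Finset.Icc 1 k, ((q : ℝ) ^ (m - k + i) - 1) / ((q : ℝ) ^ i - 1)

/-- `Φ_m^s` in `PS(n,1,q)`: the number of totally isotropic `s`-spaces containing a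
fixed totally isotropic `m`-space. -/
noncomputable def PhiP (q n m s : ℕ) : ℝ :=
  gaussq q (n - m) (s - m) * ∏ i ∈ Finset.Icc 1 (s - m), ((q : ℝ) ^ (n - m + 1 - i) + 1)

/-!
A chamber through the flag `G` is a maximal chain of totally isotropic subspaces all of which are
comparable with every `G i`, so it can be built one dimension at a time. A space `W` of dimension
`m` already chosen is extended inside `U`, where `U` is the first `G j` of dimension `> m`, or
`U = Wᗮ` once all the `G i` have been passed (for an alternating form, adjoining a vector of `Wᗮ`
keeps `W` totally isotropic). The extensions are the points of the projective space of `U ⧸ W`, so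
their number depends only on `m`, and the number of chambers is the product of these numbers:
`(q ^ (t j - m) - 1) / (q - 1)` below the top of the flag and `(q ^ (2 * (n - m)) - 1) / (q - 1)`
above it.
-/

section LevelChains

variable {α : Type*} [Preorder α]

/-- The chains `s 0 ≤ s 1 ≤ ⋯ ≤ s m` whose `k`-th term lies in the prescribed level `L k`.
Chambers are counted as such chains. -/
def levelChains (L : ℕ → Set α) (m : ℕ) : Set (Fin (m + 1) → α) :=
  {s | Monotone s ∧ ∀ k : Fin (m + 1), s k ∈ L k}

variable (L : ℕ → Set α)

theorem card_levelChains_zero : Nat.card (levelChains L 0) = Nat.card (L 0) :=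
  Nat.card_congr <| (Equiv.funUnique (Fin 1) α).subtypeEquiv fun s ↦ by
    simp [levelChains, Subsingleton.monotone]

/-- A level chain with one more term is a level chain together with an upper neighbour of its last
term. -/
def levelChainsSuccEquiv (m : ℕ) :
    levelChains L (m + 1) ≃
      Σ s : levelChains L m, {y // y ∈ L (m + 1) ∧ s.1 (Fin.last m) ≤ y} where
  toFun s :=
    ⟨⟨Fin.init s.1, s.2.1.comp Fin.strictMono_castSucc.monotone, fun k ↦ s.2.2 k.castSucc⟩,
      s.1 (Fin.last (m + 1)), s.2.2 (Fin.last (m + 1)), s.2.1 (Fin.le_last _)⟩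
  invFun p :=
    ⟨Fin.snoc p.1.1 p.2.1, by
      rw [← Fin.insertNth_last']
      exact Fin.insertNth_last_monotone p.1.2.1 _ p.2.2.2,
    Fin.lastCases (by simpa using p.2.2.1) (by simpa using p.1.2.2)⟩
  left_inv _ := Subtype.ext (Fin.snoc_init_self _)
  right_inv _ := Sigma.subtype_ext (Subtype.ext (by simp)) (by simp)

theorem card_levelChains_succ [Finite α] {m c : ℕ}
    (h : ∀ x ∈ L m, Nat.card {y // y ∈ L (m + 1) ∧ x ≤ y} = c) :
    Nat.card (levelChains L (m + 1)) = Nat.card (levelChains L m) * c := by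
  have := Fintype.ofFinite (levelChains L m)
  rw [Nat.card_congr (levelChainsSuccEquiv L m), Nat.card_sigma,
    Finset.sum_congr rfl fun s _ ↦ h _ (s.2.2 (Fin.last m)), Finset.sum_const, smul_eq_mul,
    Finset.card_univ, Nat.card_eq_fintype_card]

theorem card_levelChains_eq_mul_prod [Finite α] {c : ℕ → ℕ} {a b : ℕ} (hab : a ≤ b)
    (h : ∀ m ∈ Finset.Ico a b, ∀ x ∈ L m, Nat.card {y // y ∈ L (m + 1) ∧ x ≤ y} = c m) :
    Nat.card (levelChains L b) = Nat.card (levelChains L a) * ∏ m ∈ Finset.Ico a b, c m := by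
  induction b, hab using Nat.le_induction with
  | base => simp
  | succ b hab ih =>
    rw [card_levelChains_succ L (h b (by simpa using hab)),
      ih fun m hm ↦ h m (Finset.Ico_subset_Ico_right b.le_succ hm),
      Finset.prod_Ico_succ_top hab, mul_assoc]

end LevelChains

section Products

theorem prod_Ico_sub_eq_prod_Icc {M : Type*} [CommMonoid M] (g : ℕ → M) {a b : ℕ} (hab : a ≤ b) :
    ∏ m ∈ Finset.Ico a b, g (b - m) = ∏ i ∈ Finset.Icc 1 (b - a), g i := by
  rw [Finset.prod_Ico_reflect g a b.le_succ, Nat.add_sub_cancel_left, Nat.sub_add_comm hab]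
  rfl

theorem last_eq_zero_mul_prod {M : Type*} [CommMonoid M] {f : ℕ} {A : Fin (f + 1) → M}
    {c : Fin f → M} (h : ∀ i, A i.succ = A i.castSucc * c i) :
    A (Fin.last f) = A 0 * ∏ i, c i := by
  induction f with
  | zero => simp
  | succ f ih =>
    have hinit : A (Fin.last f).castSucc = A 0 * ∏ i, c (Fin.castSucc i) :=
      ih (A := fun i ↦ A i.castSucc) fun i ↦ h i.castSucc
    rw [← Fin.succ_last, h, hinit, Fin.prod_univ_castSucc, mul_assoc]

theorem zpol_eq_prod_geom_sum {q : ℕ} (hq : 1 < q) (k : ℕ) :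
    zpol q k = ∏ i ∈ Finset.Icc 1 k, ∑ l ∈ Finset.range i, (q : ℝ) ^ l :=
  Finset.prod_congr rfl fun _ _ ↦ (geom_sum_eq (by exact_mod_cast hq.ne') _).symm

theorem prod_pow_add_one_mul_zpol {q : ℕ} (hq : 1 < q) (k : ℕ) :
    (∏ i ∈ Finset.Icc 1 k, ((q : ℝ) ^ i + 1)) * zpol q k =
      ∏ i ∈ Finset.Icc 1 k, ∑ l ∈ Finset.range (2 * i), (q : ℝ) ^ l := by
  rw [zpol, ← Finset.prod_mul_distrib]
  refine Finset.prod_congr rfl fun i _ ↦ ?_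
  rw [geom_sum_eq (by exact_mod_cast hq.ne')]
  ring

end Products

section Extensions

variable {K V : Type*} [Field K] [AddCommGroup V] [Module K V]

theorem card_submodule_finrank_eq_one [Finite K] :
    Nat.card {L : Submodule K V // finrank K L = 1} =
      ∑ i ∈ Finset.range (finrank K V), Nat.card K ^ i := by
  rw [← Nat.card_congr (Projectivization.equivSubmodule K V),
    Projectivization.card_of_finrank K V rfl]

variable [FiniteDimensional K V]

theorem finrank_map_mkQ_add_finrank {W W' : Submodule K V} (h : W ≤ W') :
    finrank K (W'.map W.mkQ) + finrank K W = finrank K W' := by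
  have hker : LinearMap.ker (W.mkQ.domRestrict W') = W.submoduleOf W' := by
    ext
    simp [Submodule.submoduleOf]
  rw [← LinearMap.finrank_range_add_finrank_ker (W.mkQ.domRestrict W'),
    LinearMap.range_domRestrict, hker, (Submodule.submoduleOfEquivOfLe h).finrank_eq]

theorem card_submodule_ge_finrank_eq_succ [Finite K] (W : Submodule K V) :
    Nat.card {W' : Submodule K V // W ≤ W' ∧ finrank K W' = finrank K W + 1} =
      ∑ i ∈ Finset.range (finrank K V - finrank K W), Nat.card K ^ i := by
  rw [← W.finrank_quotient, ← card_submodule_finrank_eq_one]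
  refine Nat.card_congr <| (Equiv.subtypeSubtypeEquivSubtypeInter _ _).symm.trans <|
    W.comapMkQRelIso.symm.toEquiv.subtypeEquiv fun ⟨W', hW'⟩ ↦ ?_
  change finrank K W' = _ ↔ finrank K (W'.map W.mkQ) = 1
  rw [← finrank_map_mkQ_add_finrank hW', add_comm, add_left_cancel_iff]

theorem card_submodule_between_finrank_eq_succ [Finite K] {W U : Submodule K V} (h : W ≤ U) :
    Nat.card {W' : Submodule K V // W' ≤ U ∧ W ≤ W' ∧ finrank K W' = finrank K W + 1} =
      ∑ i ∈ Finset.range (finrank K U - finrank K W), Nat.card K ^ i := by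
  have hrank := (Submodule.submoduleOfEquivOfLe h).finrank_eq
  rw [← hrank, ← card_submodule_ge_finrank_eq_succ, hrank]
  refine Nat.card_congr <| (Equiv.subtypeSubtypeEquivSubtypeInter (· ≤ U) _).symm.trans <|
    (U.mapIic.toEquiv.subtypeEquiv fun L ↦ ?_).symm
  change _ ↔ W ≤ L.map U.subtype ∧ finrank K (L.map U.subtype) = _
  rw [Submodule.finrank_map_subtype_eq,
    ← Submodule.map_le_map_iff_of_injective U.subtype_injective]
  simp [Submodule.submoduleOf, h]

theorem le_of_comparable_of_finrank_le {W U : Submodule K V} (h : W ≤ U ∨ U ≤ W)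
    (hrank : finrank K W ≤ finrank K U) : W ≤ U :=
  h.elim id fun hUW ↦ (Submodule.eq_of_le_of_finrank_le hUW hrank).ge

theorem exists_sup_span_singleton_eq_of_finrank_eq_succ {W W' : Submodule K V} (h : W ≤ W')
    (hrank : finrank K W' = finrank K W + 1) : ∃ v ∈ W', W ⊔ Submodule.span K {v} = W' := by
  have hlt : W < W' := h.lt_of_ne fun heq ↦ by
    rw [heq] at hrank
    omega
  obtain ⟨v, hv, hvW⟩ := SetLike.exists_of_lt hlt
  have hle : W ⊔ Submodule.span K {v} ≤ W' := sup_le h (by simpa using hv)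
  have hstrict : finrank K W < finrank K ↥(W ⊔ Submodule.span K {v}) :=
    Submodule.finrank_lt_finrank_of_lt (by simpa using hvW)
  exact ⟨v, hv, Submodule.eq_of_le_of_finrank_le hle (by omega)⟩

end Extensions

section Isotropic

variable {F V : Type} [Field F] [AddCommGroup V] [Module F V] {B : LinearMap.BilinForm F V}
  {W W' : Submodule F V}

theorem isTotIso_bot : IsTotIso B ⊥ := by
  simp [IsTotIso]

theorem IsTotIso.mono (hW : IsTotIso B W) (h : W' ≤ W) : IsTotIso B W' :=
  fun u hu w hw ↦ hW u (h hu) w (h hw)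

theorem isTotIso_iff_le_orthogonal : IsTotIso B W ↔ W ≤ B.orthogonal W :=
  ⟨fun h w hw u hu ↦ h u hu w hw, fun h u hu _ hw ↦ h hw u hu⟩

theorem IsTotIso.sup_span_singleton (hB : B.IsAlt) (hW : IsTotIso B W) {v : V}
    (hv : v ∈ B.orthogonal W) : IsTotIso B (W ⊔ Submodule.span F {v}) := by
  intro x hx y hy
  obtain ⟨w, hw, _, hz, rfl⟩ := Submodule.mem_sup.1 hx
  obtain ⟨w', hw', _, hz', rfl⟩ := Submodule.mem_sup.1 hy
  obtain ⟨c, rfl⟩ := Submodule.mem_span_singleton.1 hz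
  obtain ⟨c', rfl⟩ := Submodule.mem_span_singleton.1 hz'
  have hwv : B w v = 0 := hv w hw
  have hvw' : B v w' = 0 := hB.isRefl _ _ (hv w' hw')
  simp [hW w hw w' hw', hwv, hvw', hB v]

theorem isTotIso_iff_le_orthogonal_of_finrank_eq_succ [FiniteDimensional F V] (hB : B.IsAlt)
    (hW : IsTotIso B W) (h : W ≤ W') (hrank : finrank F W' = finrank F W + 1) :
    IsTotIso B W' ↔ W' ≤ B.orthogonal W := by
  refine ⟨fun hW' ↦ (isTotIso_iff_le_orthogonal.1 hW').trans
    (LinearMap.BilinForm.orthogonal_le h), fun hle ↦ ?_⟩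
  obtain ⟨v, hv, rfl⟩ := exists_sup_span_singleton_eq_of_finrank_eq_succ h hrank
  exact hW.sup_span_singleton hB (hle hv)

theorem IsTotIso.two_mul_finrank_le [FiniteDimensional F V] (hB : B.Nondegenerate)
    (hW : IsTotIso B W) : 2 * finrank F W ≤ finrank F V := by
  have hle := Submodule.finrank_mono (isTotIso_iff_le_orthogonal.1 hW)
  rw [LinearMap.BilinForm.finrank_orthogonal hB] at hle
  have := W.finrank_le
  omega

end Isotropic

namespace SFlag

variable {F V : Type} [Field F] [AddCommGroup V] [Module F V] {B : LinearMap.BilinForm F V}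

theorem space_injective {J : Finset ℕ} :
    Function.Injective (SFlag.space : SFlag B J → ℕ → Submodule F V) := by
  rintro ⟨_, _, _, _, _⟩ ⟨_, _, _, _, _⟩ rfl
  rfl

theorem isTotIso_space {J : Finset ℕ} (C : SFlag B J) (k : ℕ) : IsTotIso B (C.space k) := by
  by_cases hk : k ∈ J
  · exact C.isotropic k hk
  · rw [C.eq_bot k hk]
    exact isTotIso_bot

variable {n : ℕ} (C : SFlag B (Finset.Icc 1 n))

theorem space_zero : C.space 0 = ⊥ :=
  C.eq_bot 0 (by simp)

theorem finrank_space {k : ℕ} (hk : k ≤ n) : finrank F (C.space k) = k := by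
  obtain rfl | hpos := k.eq_zero_or_pos
  · rw [C.space_zero, finrank_bot]
  · exact C.finrank_eq k (Finset.mem_Icc.2 ⟨hpos, hk⟩)

theorem space_mono {j k : ℕ} (hjk : j ≤ k) (hk : k ≤ n) : C.space j ≤ C.space k := by
  obtain rfl | hpos := j.eq_zero_or_pos
  · exact C.space_zero.trans_le bot_le
  · exact C.mono j (Finset.mem_Icc.2 ⟨hpos, hjk.trans hk⟩) k
      (Finset.mem_Icc.2 ⟨hpos.trans_le hjk, hk⟩) hjk

end SFlag

section CompatibleSpaces

variable {F V : Type} [Field F] [AddCommGroup V] [Module F V] {ι : Type*}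

/-- The totally isotropic `k`-spaces comparable with every member of the family `G`. For a flag `G`
these are the `k`-spaces that can occur in a chamber through `G`. -/
def compatibleSpaces (B : LinearMap.BilinForm F V) (G : ι → Submodule F V) (k : ℕ) :
    Set (Submodule F V) :=
  {W | IsTotIso B W ∧ finrank F W = k ∧ ∀ i, W ≤ G i ∨ G i ≤ W}

variable {B : LinearMap.BilinForm F V} {G : ι → Submodule F V} [FiniteDimensional F V]

theorem compatibleSpaces_zero : compatibleSpaces B G 0 = {⊥} := by
  ext W
  rw [Set.mem_singleton_iff, ← Submodule.finrank_eq_zero]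
  refine ⟨fun hW ↦ hW.2.1, fun hW ↦ ?_⟩
  obtain rfl := Submodule.finrank_eq_zero.1 hW
  exact ⟨isTotIso_bot, hW, fun i ↦ .inl bot_le⟩

theorem card_levelChains_compatibleSpaces_zero :
    Nat.card (levelChains (compatibleSpaces B G) 0) = 1 := by
  rw [card_levelChains_zero, compatibleSpaces_zero, Nat.card_unique]

/-- The chamber with spaces `s 0 ≤ ⋯ ≤ s n`, where `s 0 = ⊥` is forced by its dimension. -/
def SFlag.ofLevelChain {n : ℕ} (s : levelChains (compatibleSpaces B G) n) :
    SFlag B (Finset.Icc 1 n) where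
  space k := if hk : k < n + 1 then s.1 ⟨k, hk⟩ else ⊥
  isotropic k hk := by
    rw [dif_pos (Nat.lt_succ_of_le (Finset.mem_Icc.1 hk).2)]
    exact (s.2.2 _).1
  finrank_eq k hk := by
    rw [dif_pos (Nat.lt_succ_of_le (Finset.mem_Icc.1 hk).2)]
    exact (s.2.2 _).2.1
  mono j hj k hk hjk := by
    rw [dif_pos (Nat.lt_succ_of_le (Finset.mem_Icc.1 hj).2),
      dif_pos (Nat.lt_succ_of_le (Finset.mem_Icc.1 hk).2)]
    exact s.2.1 hjk
  eq_bot k hk := by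
    split_ifs with hkn
    · rw [← Submodule.finrank_eq_zero (R := F), (s.2.2 _).2.1]
      change k = 0
      simp only [Finset.mem_Icc] at hk
      omega
    · rfl

theorem SFlag.ofLevelChain_space {n : ℕ} (s : levelChains (compatibleSpaces B G) n)
    (k : Fin (n + 1)) : (SFlag.ofLevelChain s).space k = s.1 k :=
  dif_pos k.2

/-- The chambers through the flag `G` are the chains of spaces compatible with `G`, one of each
dimension `0, …, n`. -/
def chambersEquivLevelChains {n : ℕ} {t : ι → ℕ} (ht : ∀ i, finrank F (G i) = t i)
    (htn : ∀ i, t i ≤ n) :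
    {C : SFlag B (Finset.Icc 1 n) // ∀ i, C.space (t i) = G i} ≃
      levelChains (compatibleSpaces B G) n where
  toFun C :=
    ⟨fun k ↦ C.1.space k, fun _ k hjk ↦ C.1.space_mono hjk k.is_le,
      fun k ↦ ⟨C.1.isTotIso_space k, C.1.finrank_space k.is_le, fun i ↦ by
        rw [← C.2 i]
        exact (le_total (k : ℕ) (t i)).imp (C.1.space_mono · (htn i))
          (C.1.space_mono · k.is_le)⟩⟩
  invFun s :=
    ⟨SFlag.ofLevelChain s, fun i ↦ by
      have hspace := SFlag.ofLevelChain_space s ⟨t i, Nat.lt_succ_of_le (htn i)⟩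
      obtain ⟨-, hrank, hcomp⟩ := s.2.2 ⟨t i, Nat.lt_succ_of_le (htn i)⟩
      have heq := hrank.trans (ht i).symm
      exact hspace.trans <| (le_of_comparable_of_finrank_le (hcomp i) heq.le).antisymm
        (le_of_comparable_of_finrank_le (hcomp i).symm heq.ge)⟩
  left_inv C := Subtype.ext <| SFlag.space_injective <| funext fun k ↦ by
    by_cases hk : k < n + 1
    · exact dif_pos hk
    · exact (dif_neg hk).trans (C.1.eq_bot k (by simp only [Finset.mem_Icc]; omega)).symm
  right_inv s := Subtype.ext <| funext <| SFlag.ofLevelChain_space s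

variable {m : ℕ} {W : Submodule F V}

theorem card_compatibleSpaces_ge_of_lt [Finite F] [Preorder ι] (hG : Monotone G)
    (hiso : ∀ i, IsTotIso B (G i)) {j : ι} (hj : m < finrank F (G j))
    (hmin : ∀ i, finrank F (G i) ≤ m ∨ j ≤ i) (hW : W ∈ compatibleSpaces B G m) :
    Nat.card {W' // W' ∈ compatibleSpaces B G (m + 1) ∧ W ≤ W'} =
      ∑ l ∈ Finset.range (finrank F (G j) - m), Nat.card F ^ l := by
  obtain ⟨-, rfl, hcomp⟩ := hW
  rw [← card_submodule_between_finrank_eq_succ (le_of_comparable_of_finrank_le (hcomp j) hj.le)]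
  refine Nat.card_congr <| Equiv.subtypeEquivRight fun W' ↦ ⟨?_, ?_⟩
  · rintro ⟨⟨-, hrank, hcomp'⟩, hle⟩
    exact ⟨le_of_comparable_of_finrank_le (hcomp' j) (hrank.trans_le hj), hle, hrank⟩
  · rintro ⟨hle', hle, hrank⟩
    refine ⟨⟨(hiso j).mono hle', hrank, fun i ↦ ?_⟩, hle⟩
    exact (hmin i).symm.imp (fun hji ↦ hle'.trans (hG hji))
      fun hi ↦ (le_of_comparable_of_finrank_le (hcomp i).symm hi).trans hle

theorem card_compatibleSpaces_ge_of_forall_le [Finite F] (halt : B.IsAlt) (hB : B.Nondegenerate)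
    (hG : ∀ i, finrank F (G i) ≤ m) (hW : W ∈ compatibleSpaces B G m) :
    Nat.card {W' // W' ∈ compatibleSpaces B G (m + 1) ∧ W ≤ W'} =
      ∑ l ∈ Finset.range (finrank F V - 2 * m), Nat.card F ^ l := by
  obtain ⟨hWiso, rfl, hcomp⟩ := hW
  rw [two_mul, ← Nat.sub_sub, ← LinearMap.BilinForm.finrank_orthogonal hB,
    ← card_submodule_between_finrank_eq_succ (isTotIso_iff_le_orthogonal.1 hWiso)]
  refine Nat.card_congr <| Equiv.subtypeEquivRight fun W' ↦ ⟨?_, ?_⟩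
  · rintro ⟨⟨hiso, hrank, -⟩, hle⟩
    exact ⟨(isTotIso_iff_le_orthogonal_of_finrank_eq_succ halt hWiso hle hrank).1 hiso, hle, hrank⟩
  · rintro ⟨hperp, hle, hrank⟩
    refine ⟨⟨(isTotIso_iff_le_orthogonal_of_finrank_eq_succ halt hWiso hle hrank).2 hperp,
      hrank, fun i ↦ .inr ?_⟩, hle⟩
    exact (le_of_comparable_of_finrank_le (hcomp i).symm (hG i)).trans hle

end CompatibleSpaces

section Counting

variable {F V : Type} [Field F] [Finite F] [AddCommGroup V] [Module F V] [FiniteDimensional F V]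
  {ι : Type*} {B : LinearMap.BilinForm F V} {G : ι → Submodule F V}

theorem card_levelChains_compatibleSpaces_finrank [LinearOrder ι] (hG : Monotone G)
    (hiso : ∀ i, IsTotIso B (G i)) {a : ℕ} {j : ι} (haj : a ≤ finrank F (G j))
    (hlt : ∀ i < j, finrank F (G i) ≤ a) :
    (Nat.card (levelChains (compatibleSpaces B G) (finrank F (G j))) : ℝ) =
      Nat.card (levelChains (compatibleSpaces B G) a) *
        zpol (Nat.card F) (finrank F (G j) - a) := by
  have := Module.finite_of_finite F (M := V)
  rw [card_levelChains_eq_mul_prod _ haj fun m hm W hW ↦ card_compatibleSpaces_ge_of_lt hG hiso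
      (Finset.mem_Ico.1 hm).2
      (fun i ↦ (lt_or_ge i j).imp_left fun hi ↦ (hlt i hi).trans (Finset.mem_Ico.1 hm).1) hW,
    prod_Ico_sub_eq_prod_Icc (fun i ↦ ∑ l ∈ Finset.range i, Nat.card F ^ l) haj,
    zpol_eq_prod_geom_sum Finite.one_lt_card]
  push_cast
  rfl

theorem card_levelChains_compatibleSpaces_rank (halt : B.IsAlt) (hB : B.Nondegenerate) {n a : ℕ}
    (hdim : finrank F V = 2 * n) (han : a ≤ n) (hG : ∀ i, finrank F (G i) ≤ a) :
    (Nat.card (levelChains (compatibleSpaces B G) n) : ℝ) =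
      Nat.card (levelChains (compatibleSpaces B G) a) *
        ((∏ i ∈ Finset.Icc 1 (n - a), ((Nat.card F : ℝ) ^ i + 1)) *
          zpol (Nat.card F) (n - a)) := by
  have := Module.finite_of_finite F (M := V)
  rw [card_levelChains_eq_mul_prod _ han fun m hm W hW ↦
      card_compatibleSpaces_ge_of_forall_le halt hB
        (fun i ↦ (hG i).trans (Finset.mem_Ico.1 hm).1) hW, hdim]
  simp only [← Nat.mul_sub]
  rw [prod_Ico_sub_eq_prod_Icc (fun i ↦ ∑ l ∈ Finset.range (2 * i), Nat.card F ^ l) han,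
    prod_pow_add_one_mul_zpol Finite.one_lt_card]
  push_cast
  rfl

end Counting

theorem stmt_15_general {F V : Type} [Field F] [Finite F] [AddCommGroup V] [Module F V]
    [FiniteDimensional F V] {n q f : ℕ} (hq : Nat.card F = q)
    {B : V →ₗ[F] V →ₗ[F] F} (halt : IsAltForm B) (hnd : NondegForm B)
    (hdim : finrank F V = 2 * n) {t : Fin (f + 1) → ℕ} {G : Fin (f + 1) → Submodule F V}
    (hGiso : ∀ i, IsTotIso B (G i)) (hGrank : ∀ i, finrank F (G i) = t i) (hGmono : Monotone G) :
    (Nat.card {C : SFlag B (Finset.Icc 1 n) // ∀ i, C.space (t i) = G i} : ℝ) =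
      (∏ j ∈ Finset.Icc 1 (n - t (Fin.last f)), ((q : ℝ) ^ j + 1)) *
        zpol q (t 0) * zpol q (n - t (Fin.last f)) *
        ∏ i : Fin f, zpol q (t i.succ - t i.castSucc) := by
  subst hq
  have halt' : LinearMap.BilinForm.IsAlt B := halt
  have hB : LinearMap.BilinForm.Nondegenerate B :=
    (LinearMap.IsRefl.nondegenerate_iff_separatingLeft halt'.isRefl).2 hnd
  have hmono {i j} (hij : i ≤ j) : finrank F (G i) ≤ finrank F (G j) :=
    Submodule.finrank_mono (hGmono hij)
  have hle (i) : finrank F (G i) ≤ n := by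
    have := (hGiso i).two_mul_finrank_le hB
    omega
  have hbottom := card_levelChains_compatibleSpaces_finrank hGmono hGiso (j := 0) (Nat.zero_le _)
    fun i hi ↦ absurd hi (Fin.not_lt_zero i)
  have hflag := last_eq_zero_mul_prod
    (A := fun i ↦ (Nat.card (levelChains (compatibleSpaces B G) (finrank F (G i))) : ℝ))
    fun i ↦ card_levelChains_compatibleSpaces_finrank hGmono hGiso (hmono i.castSucc_le_succ)
      fun k hk ↦ hmono (Fin.le_castSucc_iff.2 hk)
  have htop := card_levelChains_compatibleSpaces_rank halt' hB hdim (hle (Fin.last f))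
    fun i ↦ hmono (Fin.le_last i)
  simp only [← hGrank]
  rw [Nat.card_congr (chambersEquivLevelChains (fun _ ↦ rfl) hle), htop, hflag, hbottom,
    card_levelChains_compatibleSpaces_zero, Nat.sub_zero, Nat.cast_one]
  ring

/-- the number of chambers containing a fixed flag of type
`{t₀ < t₁ < ⋯ < t_f}`. -/
theorem stmt_15 {F V : Type} [Field F] [Fintype F] [AddCommGroup V] [Module F V]
    [FiniteDimensional F V] (n q f : ℕ) (hn : 3 ≤ n) (hq : Fintype.card F = q)
    (B : V →ₗ[F] V →ₗ[F] F) (halt : IsAltForm B) (hnd : NondegForm B)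
    (hdim : Module.finrank F V = 2 * n)
    (t : Fin (f + 1) → ℕ) (ht : StrictMono t) (htmem : ∀ i, t i ∈ Finset.Icc 1 n)
    (G : Fin (f + 1) → Submodule F V)
    (hGiso : ∀ i, IsTotIso B (G i))
    (hGrank : ∀ i, Module.finrank F (G i) = t i)
    (hGmono : ∀ i j, i ≤ j → G i ≤ G j) :
    (Nat.card {C : SFlag B (Finset.Icc 1 n) //
        ∀ i : Fin (f + 1), SFlag.space C (t i) = G i} : ℝ) =
      (∏ j ∈ Finset.Icc 1 (n - t (Fin.last f)), ((q : ℝ) ^ j + 1)) *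
        zpol q (t 0) * zpol q (n - t (Fin.last f)) *
        ∏ i : Fin f, zpol q (t i.succ - t i.castSucc) :=
  stmt_15_general (Nat.card_eq_fintype_card.trans hq) halt hnd hdim hGiso hGrank hGmono
end

section
/- Let 1 ≤ m ≤ s ≤ n, let S be a totally isotropic s-space and M a totally isotropic m-space of the symplectic polar space of rank n with M ∩ S^⊥ = {0}. Then the number of totally isotropic s-spaces T with M ⊆ T and T opposite to S (i.e. S^⊥ ∩ T = {0}) equals q^{(s−m)(2n−s−m+1) − (s−m)(s−m+1)/2}. -/
open scoped Classical

open Module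

/-!
The opposite subspaces in question are the totally isotropic complements of `U = S^⊥` through `M`,
and `U^⊥ = S ⊔ ker B` lies in `U`. If `M` is not yet such a complement, some `w` in `M^⊥` lies
outside `M ⊔ U`. Each isotropic complement `T` of `U` through `M` lies in `M^⊥` and meets the coset
`w + U` in exactly one vector `w + u`, which has `u` in `U ⊓ M^⊥`. Since `U^⊥ ≤ U` meets `M`
trivially, `U ⊓ M^⊥` has dimension `dim U - dim M`. Replacing `M` by `M ⊔ ⟨w + u⟩` thus contributes
a factor `q ^ (dim U - dim M)`, and after `s - m` such steps only `T = M` remains.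
-/

section CommRing

variable {R V : Type*} [CommRing R] [AddCommGroup V] [Module R V]

variable {B : LinearMap.BilinForm R V} {U M T : Submodule R V} {v w : V}

lemma le_orthogonal_comm (hB : B.IsRefl) {A C : Submodule R V} :
    A ≤ B.orthogonal C ↔ C ≤ B.orthogonal A :=
  ⟨fun h c hc a ha => hB c a (h ha c hc), fun h a ha c hc => hB a c (h hc a ha)⟩

lemma sup_le_orthogonal_sup (hB : B.IsRefl) {A C : Submodule R V} (hA : A ≤ B.orthogonal A)
    (hC : C ≤ B.orthogonal C) (hAC : C ≤ B.orthogonal A) : A ⊔ C ≤ B.orthogonal (A ⊔ C) :=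
  sup_le ((le_orthogonal_comm hB).2 (sup_le hA hAC))
    ((le_orthogonal_comm hB).2 (sup_le ((le_orthogonal_comm hB).1 hAC) hC))

lemma sup_span_singleton_le_orthogonal (hB : B.IsAlt) (hM : M ≤ B.orthogonal M)
    (hv : v ∈ B.orthogonal M) : M ⊔ R ∙ v ≤ B.orthogonal (M ⊔ R ∙ v) := by
  have hspan : R ∙ v ≤ B.orthogonal (R ∙ v) := by
    rw [Submodule.span_singleton_le_iff_mem, LinearMap.BilinForm.mem_orthogonal_iff]
    intro x hx
    obtain ⟨c, rfl⟩ := Submodule.mem_span_singleton.1 hx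
    simp [hB.self_eq_zero v]
  exact sup_le_orthogonal_sup hB.isRefl hM hspan ((Submodule.span_singleton_le_iff_mem _ _).2 hv)

/-- The totally isotropic complements of the submodule `U` that contain the submodule `M`, where
`T ≤ B.orthogonal T` encodes that `T` is totally isotropic. Over a field, for `U = B.orthogonal S`
where `S` is totally isotropic and meets `ker B` trivially, these are the subspaces through `M`
opposite to `S`. -/
def isotropicCompls (B : LinearMap.BilinForm R V) (U M : Submodule R V) : Set (Submodule R V) :=
  {T | T ≤ B.orthogonal T ∧ M ≤ T ∧ IsCompl T U}

lemma isotropicCompls_eq_singleton (hM : M ≤ B.orthogonal M) (hMU : IsCompl M U) :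
    isotropicCompls B U M = {M} := by
  ext T
  refine ⟨fun ⟨_, hMT, hTU⟩ => ?_, ?_⟩
  · exact (eq_of_le_of_inf_le_of_le_sup hMT (hTU.inf_eq_bot.trans_le bot_le)
      (le_top.trans_eq hMU.sup_eq_top.symm)).symm
  · rintro rfl
    exact ⟨hM, le_rfl, hMU⟩

lemma mem_isotropicCompls_sup_span_singleton :
    T ∈ isotropicCompls B U (M ⊔ R ∙ v) ↔ T ∈ isotropicCompls B U M ∧ v ∈ T := by
  simp only [isotropicCompls, Set.mem_ofPred_eq, sup_le_iff, Submodule.span_singleton_le_iff_mem]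
  tauto

lemma existsUnique_add_mem_of_mem_isotropicCompls (hT : T ∈ isotropicCompls B U M)
    (hw : w ∈ B.orthogonal M) : ∃! u : ↥(U ⊓ B.orthogonal M), w + u ∈ T := by
  obtain ⟨hiso, hMT, hTU⟩ := hT
  obtain ⟨t, ht, u, hu, rfl⟩ := Submodule.mem_sup.1 (hTU.sup_eq_top ▸ Submodule.mem_top (x := w))
  have htM : t ∈ B.orthogonal M := LinearMap.BilinForm.orthogonal_le hMT (hiso ht)
  have huM : u ∈ B.orthogonal M := by simpa using sub_mem hw htM
  refine ⟨-⟨u, hu, huM⟩, by simpa using ht, fun u' hu' => ?_⟩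
  have hmem : u + u' ∈ T := by simpa [add_assoc] using sub_mem hu' ht
  have hzero := Submodule.disjoint_def.1 hTU.disjoint _ hmem (add_mem hu u'.2.1)
  exact Subtype.ext (eq_neg_of_add_eq_zero_right hzero)

/-- Fixing `w` in `B.orthogonal M`, the isotropic complements `T` of `U` through `M` are fibred over
`U ⊓ B.orthogonal M`: `T` lies over the unique `u` in this subspace with `w + u ∈ T`. -/
noncomputable def isotropicComplsEquivSigma (hw : w ∈ B.orthogonal M) :
    isotropicCompls B U M ≃
      Σ u : ↥(U ⊓ B.orthogonal M), isotropicCompls B U (M ⊔ R ∙ (w + (u : V))) :=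
  (Equiv.ofBijective
    (fun x => ⟨x.2.1, (mem_isotropicCompls_sup_span_singleton.1 x.2.2).1⟩) <| by
    constructor
    · rintro ⟨u, T, hT⟩ ⟨u', T', hT'⟩ h
      obtain rfl : T = T' := congrArg Subtype.val h
      rw [mem_isotropicCompls_sup_span_singleton] at hT hT'
      obtain rfl := (existsUnique_add_mem_of_mem_isotropicCompls hT.1 hw).unique hT.2 hT'.2
      rfl
    · rintro ⟨T, hT⟩
      obtain ⟨u, hu, -⟩ := existsUnique_add_mem_of_mem_isotropicCompls hT hw
      exact ⟨⟨u, T, mem_isotropicCompls_sup_span_singleton.2 ⟨hT, hu⟩⟩, rfl⟩).symm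

end CommRing

section Field

variable {K V : Type*} [Field K] [AddCommGroup V] [Module K V]
  {B : LinearMap.BilinForm K V} {U M : Submodule K V} {v : V}

lemma disjoint_sup_span_singleton (hMU : Disjoint M U) (hv : v ∉ M ⊔ U) :
    Disjoint (M ⊔ K ∙ v) U := by
  rw [sup_comm]
  exact hMU.disjoint_sup_left_of_disjoint_sup_right
    (Submodule.disjoint_span_singleton_of_notMem hv).symm

variable [FiniteDimensional K V]

lemma orthogonal_orthogonal_eq_sup_ker (hB : B.IsRefl) (W : Submodule K V) :
    B.orthogonal (B.orthogonal W) = W ⊔ LinearMap.ker B := by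
  have hker : LinearMap.ker B ≤ B.orthogonal (B.orthogonal W) := by
    rw [← LinearMap.BilinForm.orthogonal_top_eq_ker hB]
    exact LinearMap.BilinForm.orthogonal_le le_top
  refine (Submodule.eq_of_le_of_finrank_le
    (sup_le (LinearMap.BilinForm.le_orthogonal_orthogonal hB) hker) ?_).symm
  have hW := LinearMap.BilinForm.finrank_add_finrank_orthogonal hB W
  have hW' := LinearMap.BilinForm.finrank_add_finrank_orthogonal hB (B.orthogonal W)
  rw [LinearMap.BilinForm.orthogonal_top_eq_ker hB] at hW hW'
  have hsup := Submodule.finrank_sup_add_finrank_inf_eq W (LinearMap.ker B)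
  have hinf := Submodule.finrank_mono
    (inf_le_right : B.orthogonal W ⊓ LinearMap.ker B ≤ LinearMap.ker B)
  omega

lemma finrank_inf_orthogonal_add_finrank (hB : B.IsRefl) (hMU : Disjoint M (B.orthogonal U)) :
    finrank K ↥(U ⊓ B.orthogonal M) + finrank K M = finrank K U := by
  let pairing : M →ₗ[K] U →ₗ[K] K := B.domRestrict₁₂ M U
  have hinj : Function.Injective pairing := by
    refine LinearMap.ker_eq_bot.1 (LinearMap.ker_eq_bot'.2 fun m hm => ?_)
    have hmU : (m : V) ∈ B.orthogonal U := fun u hu => hB m u (LinearMap.congr_fun hm ⟨u, hu⟩)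
    exact Subtype.ext (Submodule.disjoint_def.1 hMU m m.2 hmU)
  have hrange : LinearMap.range pairing.flip = ⊤ :=
    LinearMap.range_eq_top.2 (LinearMap.flip_surjective_iff₁.2 hinj)
  have hker : (LinearMap.ker pairing.flip).map U.subtype = U ⊓ B.orthogonal M := by
    ext u
    simp [pairing, LinearMap.ext_iff, LinearMap.domRestrict₁₂_apply, and_comm]
  have hrank := LinearMap.finrank_range_add_finrank_ker pairing.flip
  rwa [hrange, finrank_top, Subspace.dual_finrank_eq, add_comm, ← Submodule.finrank_map_subtype_eq,
    hker] at hrank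

lemma exists_mem_orthogonal_notMem_sup (hB : B.IsRefl) (hU : B.orthogonal U ≤ U)
    (hM : M ≤ B.orthogonal M) (hMU : Disjoint M U)
    (hlt : finrank K M + finrank K U < finrank K V) :
    ∃ w ∈ B.orthogonal M, w ∉ M ⊔ U := by
  by_contra! hle
  have horth : B.orthogonal M = M ⊔ (U ⊓ B.orthogonal M) := by
    rw [← sup_inf_assoc_of_le U hM, right_eq_inf]
    exact hle
  have hsup := Submodule.finrank_add_le_finrank_add_finrank M (U ⊓ B.orthogonal M)
  have hinf := finrank_inf_orthogonal_add_finrank hB (hMU.mono_right hU)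
  have hrank := LinearMap.BilinForm.finrank_add_finrank_orthogonal hB M
  rw [← horth] at hsup
  omega

-- `finrank K U - j` never truncates: `hU` forces `finrank K V - finrank K U ≤ finrank K U`.
theorem natCard_isotropicCompls [Finite K] (hB : B.IsAlt) (hU : B.orthogonal U ≤ U)
    (hM : M ≤ B.orthogonal M) (hMU : Disjoint M U) :
    Nat.card (isotropicCompls B U M) =
      Nat.card K ^ ∑ j ∈ Finset.Ico (finrank K M) (finrank K V - finrank K U),
        (finrank K U - j) := by
  induction hr : finrank K V - finrank K U - finrank K M generalizing M with
  | zero =>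
    have hcompl : IsCompl M U := (Submodule.isCompl_iff_disjoint M U (by omega)).2 hMU
    rw [isotropicCompls_eq_singleton hM hcompl, Finset.Ico_eq_empty_of_le (by omega),
      Finset.sum_empty, pow_zero, Nat.card_unique]
  | succ r ih =>
    obtain ⟨w, hwM, hw⟩ := exists_mem_orthogonal_notMem_sup hB.isRefl hU hM hMU (by omega)
    have hnext (u : ↥(U ⊓ B.orthogonal M)) :
        Nat.card (isotropicCompls B U (M ⊔ K ∙ (w + (u : V)))) = Nat.card K ^
          ∑ j ∈ Finset.Ico (finrank K M + 1) (finrank K V - finrank K U), (finrank K U - j) := by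
      have hv : w + u ∉ M ⊔ U := by
        rwa [Submodule.add_mem_iff_left _ (le_sup_right (a := M) u.2.1)]
      rw [← Submodule.finrank_sup_span_singleton fun h => hv (Submodule.mem_sup_left h)]
      refine ih (sup_span_singleton_le_orthogonal hB hM (add_mem hwM u.2.2))
        (disjoint_sup_span_singleton hMU hv) ?_
      rw [Submodule.finrank_sup_span_singleton fun h => hv (Submodule.mem_sup_left h)]
      omega
    have : Finite V := Module.finite_of_finite K
    have : Fintype ↥(U ⊓ B.orthogonal M) := Fintype.ofFinite _
    have hdim : finrank K ↥(U ⊓ B.orthogonal M) = finrank K U - finrank K M :=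
      Nat.eq_sub_of_add_eq (finrank_inf_orthogonal_add_finrank hB.isRefl (hMU.mono_right hU))
    rw [Nat.card_congr (isotropicComplsEquivSigma hwM), Nat.card_sigma,
      Finset.sum_congr rfl fun u _ => hnext u, Finset.sum_const, Finset.card_univ, smul_eq_mul,
      ← Nat.card_eq_fintype_card, Module.natCard_eq_pow_finrank (K := K), ← pow_add, hdim,
      ← Finset.sum_eq_sum_Ico_succ_bot (f := fun j => finrank K U - j) (by omega)]

end Field

lemma sum_Ico_tsub (m : ℕ) {s d : ℕ} (hsd : s ≤ d) :
    ∑ j ∈ Finset.Ico m s, (d - j) =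
      (s - m) * (d - m + 1) - (s - m) * (s - m + 1) / 2 := by
  have hgauss : ∑ i ∈ Finset.range (s - m), (i + 1) = (s - m) * (s - m + 1) / 2 := by
    have := Finset.sum_range_id (s - m + 1)
    rwa [Finset.sum_range_succ', add_zero, Nat.add_sub_cancel, mul_comm] at this
  have hsum : ∑ i ∈ Finset.range (s - m), (d - (m + i)) + ∑ i ∈ Finset.range (s - m), (i + 1) =
      (s - m) * (d - m + 1) := by
    rw [← Finset.sum_add_distrib, Finset.sum_congr rfl (g := fun _ => d - m + 1), Finset.sum_const,
      Finset.card_range, smul_eq_mul]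
    intro i hi
    have := Finset.mem_range.1 hi
    omega
  rw [Finset.sum_Ico_eq_sum_range, ← hgauss, ← hsum, Nat.add_sub_cancel]

theorem stmt_17_general {K V : Type*} [Field K] [Finite K] [AddCommGroup V] [Module K V]
    [FiniteDimensional K V] {B : LinearMap.BilinForm K V} (hB : B.IsAlt) {S M : Submodule K V}
    (hS : S ≤ B.orthogonal S) (hSker : Disjoint S (LinearMap.ker B))
    (hM : M ≤ B.orthogonal M) (hMS : Disjoint M (B.orthogonal S)) {m s : ℕ}
    (hMrank : finrank K M = m) (hSrank : finrank K S = s) :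
    Nat.card {T : Submodule K V // T ≤ B.orthogonal T ∧ finrank K T = s ∧ M ≤ T ∧
        B.orthogonal S ⊓ T = ⊥} =
      Nat.card K ^ ((s - m) * (finrank K V - s - m + 1) - (s - m) * (s - m + 1) / 2) := by
  have hrank : finrank K S + finrank K (B.orthogonal S) = finrank K V := by
    rw [LinearMap.BilinForm.finrank_add_finrank_orthogonal', hSker.eq_bot, finrank_bot, add_zero]
  have hcoiso : B.orthogonal (B.orthogonal S) ≤ B.orthogonal S := by
    rw [orthogonal_orthogonal_eq_sup_ker hB.isRefl,
      ← LinearMap.BilinForm.orthogonal_top_eq_ker hB.isRefl]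
    exact sup_le hS (LinearMap.BilinForm.orthogonal_le le_top)
  have hcompl (T : Submodule K V) :
      (T ≤ B.orthogonal T ∧ finrank K T = s ∧ M ≤ T ∧ B.orthogonal S ⊓ T = ⊥) ↔
        T ∈ isotropicCompls B (B.orthogonal S) M := by
    refine and_congr_right fun _ => ⟨fun ⟨_, hMT, hST⟩ => ⟨hMT, ?_⟩, fun ⟨hMT, hT⟩ => ?_⟩
    · exact (Submodule.isCompl_iff_disjoint T _ (by omega)).2 (disjoint_iff.2 hST).symm
    · have := Submodule.finrank_add_eq_of_isCompl hT
      exact ⟨by omega, hMT, hT.symm.inf_eq_bot⟩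
  rw [Nat.card_congr (Equiv.subtypeEquivRight hcompl)]
  refine (natCard_isotropicCompls hB hcoiso hM hMS).trans ?_
  rw [← hrank, Nat.add_sub_cancel, sum_Ico_tsub _ (Submodule.finrank_mono hS), hMrank, hSrank,
    Nat.add_sub_cancel_left]

section SymplecticPolarSpace

variable {F V : Type} [Field F] [AddCommGroup V] [Module F V]

lemma bperp_eq_orthogonal (B : V →ₗ[F] V →ₗ[F] F) (W : Submodule F V) :
    bperp B W = LinearMap.BilinForm.orthogonal B W := by
  ext v
  simp [bperp]

lemma isTotIso_iff_le_orthogonal_s17 {B : V →ₗ[F] V →ₗ[F] F} {W : Submodule F V} :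
    IsTotIso B W ↔ W ≤ LinearMap.BilinForm.orthogonal B W :=
  forall₂_comm

lemma NondegForm.ker_eq_bot {B : V →ₗ[F] V →ₗ[F] F} (hB : NondegForm B) : LinearMap.ker B = ⊥ :=
  LinearMap.ker_eq_bot'.2 fun v hv => hB v (LinearMap.congr_fun hv)

end SymplecticPolarSpace

/-- if `M` is a totally isotropic `m`-space with `M ∩ S^⊥ = 0` for a
totally isotropic `s`-space `S`, then the number of totally isotropic `s`-spaces
through `M` opposite to `S` is `q^{(s-m)(2n-s-m+1)-(s-m)(s-m+1)/2}`. -/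
theorem stmt_17 {F V : Type} [Field F] [Fintype F] [AddCommGroup V] [Module F V]
    [FiniteDimensional F V] (n q : ℕ) (hn : 3 ≤ n) (hq : Fintype.card F = q)
    (B : V →ₗ[F] V →ₗ[F] F) (halt : IsAltForm B) (hnd : NondegForm B)
    (hdim : Module.finrank F V = 2 * n)
    (m s : ℕ) (hm : 1 ≤ m) (hms : m ≤ s) (hsn : s ≤ n)
    (S : Submodule F V) (hSiso : IsTotIso B S) (hSrank : Module.finrank F S = s)
    (M : Submodule F V) (hMiso : IsTotIso B M) (hMrank : Module.finrank F M = m)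
    (hskew : M ⊓ bperp B S = ⊥) :
    Nat.card {T : Submodule F V // IsTotIso B T ∧ Module.finrank F T = s ∧
        M ≤ T ∧ bperp B S ⊓ T = ⊥} =
      q ^ ((s - m) * (2 * n - s - m + 1) - (s - m) * ((s - m) + 1) / 2) := by
  simp only [isTotIso_iff_le_orthogonal_s17, bperp_eq_orthogonal] at hSiso hMiso hskew ⊢
  rw [stmt_17_general halt hSiso (hnd.ker_eq_bot ▸ disjoint_bot_right) hMiso
    (disjoint_iff.2 hskew) hMrank hSrank, hdim, Nat.card_eq_fintype_card, hq]
end
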